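/- For f ∈ H_w and fixed t ≥ 0, define g(x) = f(t∧x) and g̃(x) = 1_{t≤x}(f(x) - f(t)). Then g, g̃ ∈ H_w, f = g + g̃, g and g̃ are orthogonal in H_w, and ‖f‖²_w = ‖g‖²_w + ‖g̃‖²_w. -/

import Mathlib

open MeasureTheory Set Filter Real
open scoped RealInnerProductSpace

/-! Stopping `f` at `t` cuts its derivative down to `1_{x<t} f'`, so the remainder has derivative
`1_{t≤x} f'` and vanishes at `0`. The two derivatives have disjoint supports, which gives both the
orthogonality and the splitting of the weighted integral. -/

section Stopped

variable {ι U : Type*} [LinearOrder ι]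

/-- The function `g(x) = f(t ∧ x)`, i.e. `f` frozen from time `t` on. -/
def stopped (t : ι) (f : ι → U) : ι → U := fun x => f (min t x)

/-- The function `g̃(x) = 1_{t ≤ x} (f(x) - f(t))`, i.e. the increment of `f` after time `t`. -/
def incrementAfter [AddGroup U] (t : ι) (f : ι → U) : ι → U :=
  fun x => if t ≤ x then f x - f t else 0

theorem stopped_of_le {t x : ι} (hx : x ≤ t) (f : ι → U) : stopped t f x = f x := by
  rw [stopped, min_eq_right hx]

theorem incrementAfter_eq_sub_stopped [AddGroup U] (t : ι) (f : ι → U) :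
    incrementAfter t f = f - stopped t f := by
  ext x
  rcases le_or_gt t x with h | h
  · simp [stopped, incrementAfter, h]
  · simp [stopped, incrementAfter, h.le, h.not_ge]

theorem incrementAfter_of_le [AddGroup U] {t x : ι} (hx : x ≤ t) (f : ι → U) :
    incrementAfter t f x = 0 := by
  rw [incrementAfter_eq_sub_stopped, Pi.sub_apply, stopped_of_le hx, sub_self]

theorem stopped_add_incrementAfter [AddCommGroup U] (t : ι) (f : ι → U) :
    stopped t f + incrementAfter t f = f := by
  rw [incrementAfter_eq_sub_stopped, add_sub_cancel]

end Stopped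

section Indicator

variable {α E : Type*} [NormedAddCommGroup E] {s : Set α}

theorem mul_norm_indicator_sq (w : α → ℝ) (f : α → E) :
    (fun x => w x * ‖s.indicator f x‖ ^ 2) = s.indicator fun x => w x * ‖f x‖ ^ 2 := by
  ext x
  by_cases hx : x ∈ s <;> simp [hx]

variable [MeasurableSpace α] {μ : Measure α} {w : α → ℝ} {f : α → E}

theorem integrable_mul_norm_indicator_sq (hs : MeasurableSet s)
    (hf : Integrable (fun x => w x * ‖f x‖ ^ 2) μ) :
    Integrable (fun x => w x * ‖s.indicator f x‖ ^ 2) μ :=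
  mul_norm_indicator_sq w f ▸ hf.indicator hs

theorem integral_mul_norm_indicator_sq_add_compl (hs : MeasurableSet s)
    (hf : Integrable (fun x => w x * ‖f x‖ ^ 2) μ) :
    ∫ x, w x * ‖s.indicator f x‖ ^ 2 ∂μ + ∫ x, w x * ‖sᶜ.indicator f x‖ ^ 2 ∂μ =
      ∫ x, w x * ‖f x‖ ^ 2 ∂μ := by
  simp only [mul_norm_indicator_sq, integral_indicator hs, integral_indicator hs.compl]
  exact integral_add_compl hs hf

end Indicator

theorem inner_indicator_indicator_of_disjoint (𝕜 : Type*) {α E : Type*} [RCLike 𝕜]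
    [NormedAddCommGroup E] [InnerProductSpace 𝕜 E] {s t : Set α} (hst : Disjoint s t)
    (f g : α → E) (x : α) : inner 𝕜 (s.indicator f x) (t.indicator g x) = 0 := by
  by_cases hx : x ∈ s
  · rw [indicator_of_notMem (disjoint_left.mp hst hx), inner_zero_right]
  · rw [indicator_of_notMem hx, inner_zero_left]

section IntervalIntegral

variable {E : Type*} [NormedAddCommGroup E] {μ : Measure ℝ} {f : ℝ → E} {a b t : ℝ}

theorem intervalIntegrable_indicator {s : Set ℝ} (hs : MeasurableSet s)
    (hf : IntervalIntegrable f μ a b) : IntervalIntegrable (s.indicator f) μ a b :=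
  ⟨hf.1.indicator hs, hf.2.indicator hs⟩

theorem intervalIntegral_indicator_Iio [NormedSpace ℝ E] [NullSingletonClass μ]
    (hat : a ≤ t) (hab : a ≤ b) :
    ∫ x in a..b, (Iio t).indicator f x ∂μ = ∫ x in a..min t b, f x ∂μ := by
  have hIio : (Iio t).indicator f =ᵐ[μ.restrict (Ioc a b)] (Iic t).indicator f :=
    indicator_ae_eq_of_ae_eq_set Iio_ae_eq_Iic
  rw [intervalIntegral.integral_of_le hab, intervalIntegral.integral_of_le (le_min hat hab),
    integral_congr_ae hIio, setIntegral_indicator measurableSet_Iic, Ioc_inter_Iic, min_comm]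

end IntervalIntegral

section FilipovicSpace

variable {U : Type*} [NormedAddCommGroup U] {w : ℝ → ℝ} {t : ℝ} {f f' : ℝ → U}

/-- `f ∈ H_w`, with the weak derivative `f'` carried along explicitly: `f` is absolutely continuous
on `[0, ∞)` with a.e. derivative `f'`, and `w ‖f'‖²` is integrable. Absolute continuity is encoded
as being the primitive of a locally integrable function. -/
structure MemFilipovicSpace [NormedSpace ℝ U] (w : ℝ → ℝ) (f f' : ℝ → U) : Prop where
  intervalIntegrable : ∀ y ∈ Ici (0 : ℝ), IntervalIntegrable f' volume 0 y
  eq_add_integral : ∀ y ∈ Ici (0 : ℝ), f y = f 0 + ∫ s in (0 : ℝ)..y, f' s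
  integrableOn : IntegrableOn (fun y => w y * ‖f' y‖ ^ 2) (Ioi 0)

theorem MemFilipovicSpace.stopped [NormedSpace ℝ U] (ht : 0 ≤ t) (hf : MemFilipovicSpace w f f') :
    MemFilipovicSpace w (stopped t f) ((Iio t).indicator f') where
  intervalIntegrable y hy := intervalIntegrable_indicator measurableSet_Iio
    (hf.intervalIntegrable y hy)
  eq_add_integral y hy := by
    rw [stopped_of_le ht, intervalIntegral_indicator_Iio ht hy]
    exact hf.eq_add_integral _ (le_min ht hy)
  integrableOn := integrable_mul_norm_indicator_sq measurableSet_Iio hf.integrableOn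

theorem MemFilipovicSpace.incrementAfter [NormedSpace ℝ U] (ht : 0 ≤ t)
    (hf : MemFilipovicSpace w f f') :
    MemFilipovicSpace w (incrementAfter t f) ((Ici t).indicator f') where
  intervalIntegrable y hy := intervalIntegrable_indicator measurableSet_Ici
    (hf.intervalIntegrable y hy)
  eq_add_integral y hy := by
    have hg := hf.stopped ht
    have hderiv : (Ici t).indicator f' = f' - (Iio t).indicator f' := by
      rw [← compl_Iio, indicator_compl]
    simp only [incrementAfter_eq_sub_stopped, hderiv, Pi.sub_apply]
    rw [intervalIntegral.integral_sub (hf.intervalIntegrable y hy) (hg.intervalIntegrable y hy),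
      hf.eq_add_integral y hy, hg.eq_add_integral y hy, add_sub_add_comm]
  integrableOn := integrable_mul_norm_indicator_sq measurableSet_Ici hf.integrableOn

/-- The inner product of `H_w`, with the weak derivatives `f'`, `g'` of `f`, `g` passed as
arguments. -/
noncomputable def filipovicInner (𝕜 : Type*) [RCLike 𝕜] [InnerProductSpace 𝕜 U]
    (w : ℝ → ℝ) (f f' g g' : ℝ → U) : 𝕜 :=
  inner 𝕜 (f 0) (g 0) + ∫ x in Ioi (0 : ℝ), w x • inner 𝕜 (f' x) (g' x)

theorem filipovicInner_stopped_incrementAfter (𝕜 : Type*) [RCLike 𝕜] [InnerProductSpace 𝕜 U]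
    (w : ℝ → ℝ) (ht : 0 ≤ t) (f f' : ℝ → U) :
    filipovicInner 𝕜 w (stopped t f) ((Iio t).indicator f')
      (incrementAfter t f) ((Ici t).indicator f') = 0 := by
  have hdisj : Disjoint (Iio t) (Ici t) := compl_Iio (a := t) ▸ disjoint_compl_right
  simp only [filipovicInner, incrementAfter_of_le ht, inner_zero_right,
    inner_indicator_indicator_of_disjoint 𝕜 hdisj, smul_zero, integral_zero, add_zero]

/-- The squared norm `‖f‖²_w` of `H_w`, with the weak derivative `f'` of `f` passed as an
argument. -/
noncomputable def filipovicNormSq (w : ℝ → ℝ) (f f' : ℝ → U) : ℝ :=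
  ‖f 0‖ ^ 2 + ∫ x in Ioi (0 : ℝ), w x * ‖f' x‖ ^ 2

theorem filipovicNormSq_stopped_add_incrementAfter (ht : 0 ≤ t)
    (hf : IntegrableOn (fun y => w y * ‖f' y‖ ^ 2) (Ioi 0)) :
    filipovicNormSq w f f' = filipovicNormSq w (stopped t f) ((Iio t).indicator f') +
      filipovicNormSq w (incrementAfter t f) ((Ici t).indicator f') := by
  simp only [filipovicNormSq, stopped_of_le ht, incrementAfter_of_le ht, norm_zero]
  rw [← integral_mul_norm_indicator_sq_add_compl measurableSet_Iio hf, compl_Iio]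
  ring

end FilipovicSpace

theorem stmt_5_general (𝕜 : Type*) {U : Type*} [RCLike 𝕜] [NormedAddCommGroup U]
    [InnerProductSpace 𝕜 U] [NormedSpace ℝ U] [CompleteSpace U] {w : ℝ → ℝ} {t : ℝ} (ht : 0 ≤ t)
    {f f' : ℝ → U} (hf : MemFilipovicSpace w f f') :
    f = stopped t f + incrementAfter t f ∧
    MemFilipovicSpace w (stopped t f) ((Iio t).indicator f') ∧
    MemFilipovicSpace w (incrementAfter t f) ((Ici t).indicator f') ∧
    filipovicInner 𝕜 w (stopped t f) ((Iio t).indicator f')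
      (incrementAfter t f) ((Ici t).indicator f') = 0 ∧
    filipovicNormSq w f f' = filipovicNormSq w (stopped t f) ((Iio t).indicator f') +
      filipovicNormSq w (incrementAfter t f) ((Ici t).indicator f') :=
  ⟨(stopped_add_incrementAfter t f).symm, hf.stopped ht, hf.incrementAfter ht,
    filipovicInner_stopped_incrementAfter 𝕜 w ht f f',
    filipovicNormSq_stopped_add_incrementAfter ht hf.integrableOn⟩

/-- for `f ∈ H_w` and fixed `t ≥ 0`, the functions `g(x) = f(t∧x)` and
`g̃(x) = 1_{t≤x}(f(x) − f(t))` belong to `H_w`, satisfy `f = g + g̃`, are orthogonal in `H_w`,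
and `‖f‖²_w = ‖g‖²_w + ‖g̃‖²_w`.  Here `g` has derivative `g'(x) = 1_{x<t} f'(x)` and `g̃` has
derivative `g̃'(x) = 1_{t≤x} f'(x)`. -/
theorem stmt_5 {U : Type*} [NormedAddCommGroup U] [InnerProductSpace ℝ U]
    [CompleteSpace U] [SecondCountableTopology U]
    (w : ℝ → ℝ) (hw_cont : Continuous w) (hw_mono : MonotoneOn w (Ici 0))
    (hw0 : w 0 = 1)
    (hw_inv : IntegrableOn (fun s => (w s)⁻¹) (Ioi 0))
    (t : ℝ) (ht : 0 ≤ t)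
    (f f' : ℝ → U)
    (hf_loc : ∀ y ∈ Ici (0:ℝ), IntervalIntegrable f' volume 0 y)
    (hf_ac : ∀ y ∈ Ici (0:ℝ), f y = f 0 + ∫ s in (0:ℝ)..y, f' s)
    (hf_w : IntegrableOn (fun y => w y * ‖f' y‖ ^ 2) (Ioi 0)) :
    -- f = g + g̃ pointwise
    (∀ x : ℝ, f x = f (min t x) + (if t ≤ x then f x - f t else 0)) ∧
    -- g ∈ H_w with derivative g'
    ((∀ y ∈ Ici (0:ℝ), IntervalIntegrable (fun x => if x < t then f' x else 0) volume 0 y) ∧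
      (∀ y ∈ Ici (0:ℝ), f (min t y)
        = f (min t 0) + ∫ s in (0:ℝ)..y, (if s < t then f' s else 0)) ∧
      IntegrableOn (fun y => w y * ‖if y < t then f' y else 0‖ ^ 2) (Ioi 0)) ∧
    -- g̃ ∈ H_w with derivative g̃'
    ((∀ y ∈ Ici (0:ℝ), IntervalIntegrable (fun x => if t ≤ x then f' x else 0) volume 0 y) ∧
      (∀ y ∈ Ici (0:ℝ), (if t ≤ y then f y - f t else 0)
        = (if t ≤ (0:ℝ) then f 0 - f t else 0)
          + ∫ s in (0:ℝ)..y, (if t ≤ s then f' s else 0)) ∧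
      IntegrableOn (fun y => w y * ‖if t ≤ y then f' y else 0‖ ^ 2) (Ioi 0)) ∧
    -- g ⟂ g̃ in the H_w inner product
    (⟪f (min t 0), (if t ≤ (0:ℝ) then f 0 - f t else 0)⟫
      + ∫ x in Ioi (0:ℝ),
          w x * ⟪(if x < t then f' x else 0), (if t ≤ x then f' x else 0)⟫ = 0) ∧
    -- ‖f‖²_w = ‖g‖²_w + ‖g̃‖²_w
    (‖f 0‖ ^ 2 + ∫ x in Ioi (0:ℝ), w x * ‖f' x‖ ^ 2
      = (‖f (min t 0)‖ ^ 2 + ∫ x in Ioi (0:ℝ), w x * ‖if x < t then f' x else 0‖ ^ 2)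
        + (‖if t ≤ (0:ℝ) then f 0 - f t else 0‖ ^ 2
            + ∫ x in Ioi (0:ℝ), w x * ‖if t ≤ x then f' x else 0‖ ^ 2)) := by
  obtain ⟨hsum, hg, hincr, horth, hnorm⟩ := stmt_5_general ℝ ht ⟨hf_loc, hf_ac, hf_w⟩
  exact ⟨congrFun hsum, ⟨hg.1, hg.2, hg.3⟩, ⟨hincr.1, hincr.2, hincr.3⟩, horth, hnorm⟩
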